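/- Let T² = (ℝ/ℤ)² be the 2-torus. Let f : T² → T² be a homeomorphism isotopic to the identity, let F be a nonempty finite subset of the fixed-point set Fix(f) = {x : f(x) = x}, and let k ≥ 1 be an integer such that f^k is isotopic to the identity relative to F. Then f is isotopic to the identity relative to F. -/

import Mathlib

/-- `f` is isotopic to the identity relative to `F`: there is a continuous map
`H : [0,1] × X → X` with `H t` a homeomorphism for every `t`, `H 0 = id`,
`H 1 = f`, and `H t x = x` for every `x ∈ F` and every `t`. -/
def IsotopicToIdRel {X : Type*} [TopologicalSpace X] (f : X → X) (F : Set X) : Prop :=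
  ∃ H : unitInterval × X → X, Continuous H ∧
    (∀ t : unitInterval, IsHomeomorph fun x => H (t, x)) ∧
    (∀ x, H (0, x) = x) ∧ (∀ x, H (1, x) = f x) ∧
    (∀ t : unitInterval, ∀ x ∈ F, H (t, x) = x)

/-!
Points of `F` are added to the set `A` on which the isotopy of `f` is relative one at a time. The
first one is fixed by composing with translations. For a further point `x`, lift the isotopies of
`f` and `f^k` to the plane. The trace of a lift of `x` under the isotopy of `f` is a loop in the
complement of the lift of `A`, a locally finite set with at least two points. Conjugation by the
class of the trace of a fixed point under a homotopy from the identity is the action of its end map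
on the fundamental group; since `f^k` is isotopic to the identity relative to `A ∪ {x}`, the `k`-th
power of the class of this loop is central.

A radial retraction reduces the study of the complement of the lift of `A` to that of the plane with
finitely many punctures, whose first coordinates a shear makes distinct. Removing from the plane a
vertical ray at each puncture leaves a simply connected set, and the sets obtained from descending
and from ascending rays cover the punctured plane. Hence its fundamental group is free, with one
generator for each puncture, so that an element with a central power is trivial as soon as there are
two punctures. The trace of `x` is thus null-homotopic in the complement of the lift of `A`, and
pushing the point along the null-homotopy in small steps turns the isotopy into one relative to
`A ∪ {x}`.
-/

open Set Topology

section FreeGroup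

variable {α : Type*} [Nontrivial α]

lemma freeGroup_center_eq_bot : Subgroup.center (FreeGroup α) = ⊥ := by
  classical
  refine (Subgroup.eq_bot_iff_forall _).mpr fun w hw ↦ ?_
  by_contra hw1
  have hne : w.toWord ≠ [] := mt FreeGroup.toWord_eq_nil_iff.mp hw1
  obtain ⟨b, hb⟩ := exists_ne (w.toWord.head hne).1
  let c : α × Bool := (b, (w.toWord.getLast hne).2)
  have hleft : FreeGroup.IsReduced ([c] ++ w.toWord) := by
    refine List.isChain_append.mpr ⟨.singleton _, FreeGroup.isReduced_toWord, ?_⟩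
    simp [List.head?_eq_some_head hne, c, hb]
  have hright : FreeGroup.IsReduced (w.toWord ++ [c]) := by
    refine List.isChain_append.mpr ⟨FreeGroup.isReduced_toWord, .singleton _, ?_⟩
    simp [List.getLast?_eq_some_getLast hne, c]
  have hcomm : FreeGroup.mk ([c] ++ w.toWord) = FreeGroup.mk (w.toWord ++ [c]) := by
    rw [← FreeGroup.mul_mk, ← FreeGroup.mul_mk, FreeGroup.mk_toWord]
    exact Subgroup.mem_center_iff.mp hw _
  have hwords : [c] ++ w.toWord = w.toWord ++ [c] := by
    simpa only [FreeGroup.toWord_mk, hleft.reduce_eq, hright.reduce_eq] using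
      congrArg FreeGroup.toWord hcomm
  have hhead := congrArg List.head? hwords
  rw [List.head?_append_of_ne_nil _ hne, List.head?_eq_some_head hne] at hhead
  exact hb (congrArg Prod.fst (Option.some.inj hhead))

lemma freeGroup_eq_one_of_pow_mem_center {w : FreeGroup α} {k : ℕ} (hk : k ≠ 0)
    (h : w ^ k ∈ Subgroup.center (FreeGroup α)) : w = 1 := by
  rw [freeGroup_center_eq_bot, Subgroup.mem_bot] at h
  exact (pow_eq_one_iff_left hk).mp h

end FreeGroup

section PathClasses

variable {X : Type*} [TopologicalSpace X]

lemma pathClass_induction {ι : Type*} {S : ι → Set X} (hSo : ∀ i, IsOpen (S i))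
    (hcov : ⋃ i, S i = univ) {P : ∀ {x y : X}, Path.Homotopic.Quotient x y → Prop}
    (trans : ∀ {x y z : X} (p : Path.Homotopic.Quotient x y) (q : Path.Homotopic.Quotient y z),
      P p → P q → P (p.trans q))
    (of_mem : ∀ i {x y : X} (p : Path x y), (∀ t, p t ∈ S i) → P (.mk p))
    {x y : X} (p : Path.Homotopic.Quotient x y) : P p := by
  induction p using Path.Homotopic.Quotient.ind with | mk p =>
  obtain ⟨t, ht0, ht_mono, ⟨n, hn⟩, ht_sub⟩ :=
    exists_monotone_Icc_subset_open_cover_unitInterval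
      (fun i ↦ (hSo i).preimage p.continuous) (by simp [← preimage_iUnion, hcov])
  have piece (m : ℕ) : P (.mk (p.subpath (t m) (t (m + 1)))) := by
    obtain ⟨i, hi⟩ := ht_sub m
    refine of_mem i _ (range_subset_iff.mp ?_)
    rw [Path.range_subpath_of_le p _ _ (ht_mono m.le_succ)]
    exact image_subset_iff.mpr hi
  have initial (m : ℕ) : P (.mk (p.subpath (t 0) (t (m + 1)))) := by
    induction m with
    | zero => exact piece 0
    | succ m ih =>
      rw [← Path.Homotopic.Quotient.eq.mpr ⟨Path.Homotopy.subpathTransSubpath p _ (t (m + 1)) _⟩]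
      exact trans _ _ ih (piece (m + 1))
  have whole := initial n
  rw [ht0, hn (n + 1) n.le_succ, Path.subpath_zero_one] at whole
  have uncast {x' y' : X} (hx : x' = x) (hy : y' = y) (h : P (.mk (p.cast hx hy))) :
      P (.mk p) := by
    subst hx hy
    exact h
  exact uncast _ _ whole

/-- The unique homotopy class of paths from `x` to `y` inside a simply connected set. -/
noncomputable def pathClassIn {s : Set X} (hs : IsSimplyConnected s) {x y : X} (hx : x ∈ s)
    (hy : y ∈ s) : Path.Homotopic.Quotient x y :=
  .mk (hs.isPathConnected.joinedIn x hx y hy).somePath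

variable {s : Set X} (hs : IsSimplyConnected s) {x y z : X}

lemma mk_eq_pathClassIn (p : Path x y) (hp : ∀ t, p t ∈ s) (hx : x ∈ s) (hy : y ∈ s) :
    .mk p = pathClassIn hs hx hy := by
  have := hs.simplyConnectedSpace
  have hq := (hs.isPathConnected.joinedIn x hx y hy).somePath_mem
  let p' : Path (⟨x, hx⟩ : s) ⟨y, hy⟩ :=
    ⟨⟨fun t ↦ ⟨p t, hp t⟩, by fun_prop⟩, Subtype.ext p.source, Subtype.ext p.target⟩
  let q' : Path (⟨x, hx⟩ : s) ⟨y, hy⟩ :=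
    ⟨⟨fun t ↦ ⟨_, hq t⟩, by fun_prop⟩, Subtype.ext (Path.source _), Subtype.ext (Path.target _)⟩
  exact Path.Homotopic.Quotient.eq.mpr
    ((SimplyConnectedSpace.paths_homotopic p' q').map ⟨Subtype.val, continuous_subtype_val⟩)

lemma pathClassIn_trans (hx : x ∈ s) (hy : y ∈ s) (hz : z ∈ s) :
    (pathClassIn hs hx hy).trans (pathClassIn hs hy hz) = pathClassIn hs hx hz := by
  rw [pathClassIn, pathClassIn, ← Path.Homotopic.Quotient.mk_trans]
  refine mk_eq_pathClassIn hs _ (fun t ↦ ?_) hx hz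
  rw [Path.trans_apply]
  split_ifs
  exacts [JoinedIn.somePath_mem .., JoinedIn.somePath_mem ..]

lemma pathClassIn_self (hx hx' : x ∈ s) : pathClassIn hs hx hx' = .refl x :=
  (mk_eq_pathClassIn hs (Path.refl x) (fun _ ↦ hx) hx hx').symm

lemma pathClassIn_trans_cancel (hx hx' : x ∈ s) (hy : y ∈ s)
    (q : Path.Homotopic.Quotient x z) :
    (pathClassIn hs hx hy).trans ((pathClassIn hs hy hx').trans q) = q := by
  rw [← Path.Homotopic.Quotient.trans_assoc, pathClassIn_trans, pathClassIn_self,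
    Path.Homotopic.Quotient.refl_trans]

end PathClasses

section TransitionLoop

variable {X : Type*} [TopologicalSpace X] {s t : Set X} (hs : IsSimplyConnected s)
  (ht : IsSimplyConnected t) {x₀ z : X}

/-- The class of the loops that go from `x₀` to `z` inside `s` and return inside `t`. -/
noncomputable def transitionLoop (hxs : x₀ ∈ s) (hxt : x₀ ∈ t) (hzs : z ∈ s) (hzt : z ∈ t) :
    FundamentalGroup X x₀ :=
  (pathClassIn hs hxs hzs).trans (pathClassIn ht hzt hxt)

lemma transitionLoop_same (hx hx' : x₀ ∈ s) (hz hz' : z ∈ s) :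
    transitionLoop hs hs hx hx' hz hz' = 1 := by
  rw [transitionLoop, pathClassIn_trans, pathClassIn_self, FundamentalGroup.one_def]

lemma transitionLoop_swap (hxs : x₀ ∈ s) (hxt : x₀ ∈ t) (hzs : z ∈ s) (hzt : z ∈ t) :
    transitionLoop ht hs hxt hxs hzt hzs = (transitionLoop hs ht hxs hxt hzs hzt)⁻¹ := by
  refine eq_inv_of_mul_eq_one_left ?_
  rw [FundamentalGroup.mul_def, transitionLoop, transitionLoop,
    Path.Homotopic.Quotient.trans_assoc, pathClassIn_trans_cancel, pathClassIn_trans,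
    pathClassIn_self, FundamentalGroup.one_def]

lemma transitionLoop_eq_of_joinedIn {z' : X} (hxs : x₀ ∈ s) (hxt : x₀ ∈ t) (hz : z ∈ s ∩ t)
    (hz' : z' ∈ s ∩ t) (h : JoinedIn (s ∩ t) z z') :
    transitionLoop hs ht hxs hxt hz.1 hz.2 = transitionLoop hs ht hxs hxt hz'.1 hz'.2 := by
  have hst : pathClassIn hs hz.1 hz'.1 = pathClassIn ht hz.2 hz'.2 := by
    rw [← mk_eq_pathClassIn hs h.somePath (fun t ↦ (h.somePath_mem t).1),
      ← mk_eq_pathClassIn ht h.somePath (fun t ↦ (h.somePath_mem t).2)]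
  rw [transitionLoop, transitionLoop, ← pathClassIn_trans hs hxs hz.1 hz'.1, hst,
    Path.Homotopic.Quotient.trans_assoc, pathClassIn_trans]

variable {ι : Type*} {S : ι → Set X}

lemma subgroup_eq_top_of_transitionLoop_mem (hSo : ∀ i, IsOpen (S i)) (hcov : ⋃ i, S i = univ)
    (hS : ∀ i, IsSimplyConnected (S i)) (h₀ : ∀ i, x₀ ∈ S i)
    (R : Subgroup (FundamentalGroup X x₀))
    (hR : ∀ i j z (hi : z ∈ S i) (hj : z ∈ S j),
      transitionLoop (hS i) (hS j) (h₀ i) (h₀ j) hi hj ∈ R) : R = ⊤ := by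
  let close {x y : X} {i j : ι} (hx : x ∈ S i) (hy : y ∈ S j) (p : Path.Homotopic.Quotient x y) :
      FundamentalGroup X x₀ :=
    (pathClassIn (hS i) (h₀ i) hx).trans (p.trans (pathClassIn (hS j) hy (h₀ j)))
  have close_mem {x y : X} (p : Path.Homotopic.Quotient x y) :
      ∀ i j (hx : x ∈ S i) (hy : y ∈ S j), close hx hy p ∈ R := by
    induction p using pathClass_induction hSo hcov with
    | @trans x y z p q hp hq =>
      intro i j hx hz
      obtain ⟨k, hy⟩ := mem_iUnion.mp (hcov.ge (mem_univ y))
      have split : close hx hz (p.trans q) = close hy hz q * close hx hy p := by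
        simp only [close, FundamentalGroup.mul_def, Path.Homotopic.Quotient.trans_assoc,
          pathClassIn_trans_cancel]
      exact split ▸ R.mul_mem (hq k j hy hz) (hp i k hx hy)
    | @of_mem k x y p hp =>
      intro i j hx hy
      have hxk : x ∈ S k := p.source ▸ hp 0
      have hyk : y ∈ S k := p.target ▸ hp 1
      have split : close hx hy (.mk p) = transitionLoop (hS k) (hS j) (h₀ k) (h₀ j) hyk hy *
          transitionLoop (hS i) (hS k) (h₀ i) (h₀ k) hx hxk := by
        simp only [close, transitionLoop, FundamentalGroup.mul_def,
          mk_eq_pathClassIn (hS k) p hp hxk hyk, ← pathClassIn_trans (hS k) hxk (h₀ k) hyk,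
          Path.Homotopic.Quotient.trans_assoc]
      exact split ▸ R.mul_mem (hR k j y hyk hy) (hR i k x hx hxk)
  refine R.eq_top_iff'.mpr fun γ ↦ ?_
  obtain ⟨i, -⟩ := mem_iUnion.mp (hcov.ge (mem_univ x₀))
  simpa only [close, pathClassIn_self, Path.Homotopic.Quotient.refl_trans,
    Path.Homotopic.Quotient.trans_refl] using close_mem γ i i (h₀ i) (h₀ i)

end TransitionLoop

section Holonomy

variable {X G ι : Type*} [TopologicalSpace X] [Group G] {S : ι → Set X} {e : ι → X → G}

/-- The principal `G`-bundle over `X`, with `G` discrete, which is trivial over each `S i` and has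
the transition functions `x ↦ e j x * (e i x)⁻¹`. The functions `e i` need not be continuous. -/
noncomputable def gaugeBundleCore [TopologicalSpace G] [DiscreteTopology G]
    (hSo : ∀ i, IsOpen (S i)) (hcov : ⋃ i, S i = univ)
    (he : ∀ i j, ∀ x ∈ S i ∩ S j, ∀ᶠ y in 𝓝 x, e j y * (e i y)⁻¹ = e j x * (e i x)⁻¹) :
    FiberBundleCore ι X G where
  baseSet := S
  isOpen_baseSet := hSo
  indexAt x := (mem_iUnion.mp (hcov.ge (mem_univ x))).choose
  mem_baseSet_at x := (mem_iUnion.mp (hcov.ge (mem_univ x))).choose_spec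
  coordChange i j x g := e j x * (e i x)⁻¹ * g
  coordChange_self _ _ _ _ := by rw [mul_inv_cancel, one_mul]
  coordChange_comp _ _ _ _ _ _ := by group
  continuousOn_coordChange i j := by
    rintro ⟨x, g⟩ ⟨hx, -⟩
    have hlocal : ∀ᶠ q : X × G in 𝓝 (x, g),
        e j q.1 * (e i q.1)⁻¹ * q.2 = e j x * (e i x)⁻¹ * q.2 := by
      filter_upwards [continuousAt_fst.eventually (he i j x hx)] with q hq
      rw [hq]
    exact ((by fun_prop : ContinuousAt (fun q : X × G ↦ e j x * (e i x)⁻¹ * q.2) (x, g)).congr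
      (hlocal.mono fun _ ↦ Eq.symm)).continuousWithinAt

lemma exists_transport (hSo : ∀ i, IsOpen (S i)) (hcov : ⋃ i, S i = univ)
    (he : ∀ i j, ∀ x ∈ S i ∩ S j, ∀ᶠ y in 𝓝 x, e j y * (e i y)⁻¹ = e j x * (e i x)⁻¹) :
    ∃ T : ∀ {x y : X}, Path.Homotopic.Quotient x y → G → G,
      (∀ {x y z : X} (p : Path.Homotopic.Quotient x y) (q : Path.Homotopic.Quotient y z) g,
        T (p.trans q) g = T q (T p g)) ∧
      ∀ i {x y : X} (p : Path x y), (∀ t, p t ∈ S i) → ∀ g,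
        T (.mk p) g = (e i y)⁻¹ * e i x * g := by
  let _ : TopologicalSpace G := ⊥
  have : DiscreteTopology G := ⟨rfl⟩
  let Z := gaugeBundleCore hSo hcov he
  have cov : IsCoveringMap (Bundle.TotalSpace.proj : Bundle.TotalSpace G Z.Fiber → X) :=
    FiberBundle.isCoveringMap (F := G) (E := Z.Fiber)
  let fiberEquiv (x : X) : G ≃ Bundle.TotalSpace.proj (F := G) (E := Z.Fiber) ⁻¹' {x} :=
    (Equiv.mulLeft (e (Z.indexAt x) x)).trans
      { toFun g := ⟨⟨x, g⟩, rfl⟩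
        invFun v := v.1.snd
        left_inv _ := rfl
        right_inv := by rintro ⟨⟨_, _⟩, rfl⟩; rfl }
  refine ⟨fun {x y} p g ↦ (fiberEquiv y).symm (cov.monodromy p (fiberEquiv x g)), ?_, ?_⟩
  · intro x y z p q g
    simp only [cov.monodromy_trans_apply, Equiv.apply_symm_apply]
  · intro i x y p hp g
    have hstart : (fiberEquiv x g).1 = (Z.localTriv i).invFun (p 0, e i x * g) := by
      simp only [fiberEquiv, Z, gaugeBundleCore, mul_assoc, Path.source, PartialEquiv.invFun_as_coe,
        OpenPartialHomeomorph.coe_toPartialEquiv_symm, FiberBundleCore.localTriv_symm_apply,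
        inv_mul_cancel_left]
      rfl
    have hend : (fiberEquiv y ((e i y)⁻¹ * e i x * g)).1 =
        (Z.localTriv i).invFun (p 1, e i x * g) := by
      simp only [fiberEquiv, Z, gaugeBundleCore, mul_assoc, Path.target, PartialEquiv.invFun_as_coe,
        OpenPartialHomeomorph.coe_toPartialEquiv_symm, FiberBundleCore.localTriv_symm_apply]
      rfl
    let lift : Path (fiberEquiv x g).1 (fiberEquiv y ((e i y)⁻¹ * e i x * g)).1 :=
      { toFun t := (Z.localTriv i).invFun (p t, e i x * g)
        continuous_toFun := (Z.localTriv i).continuousOn_invFun.comp_continuous (by fun_prop)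
          fun t ↦ (Z.localTriv i).mem_target.mpr (hp t)
        source' := hstart.symm
        target' := hend.symm }
    exact (Equiv.symm_apply_eq _).mpr (cov.monodromy_eq_of_map_eq (.mk lift) rfl)

lemma exists_holonomy (hSo : ∀ i, IsOpen (S i)) (hcov : ⋃ i, S i = univ)
    (he : ∀ i j, ∀ x ∈ S i ∩ S j, ∀ᶠ y in 𝓝 x, e j y * (e i y)⁻¹ = e j x * (e i x)⁻¹) :
    ∃ hol : ∀ {x y : X}, Path.Homotopic.Quotient x y → G,
      (∀ {x y z : X} (p : Path.Homotopic.Quotient x y) (q : Path.Homotopic.Quotient y z),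
        hol (p.trans q) = hol q * hol p) ∧
      ∀ i {x y : X} (p : Path x y), (∀ t, p t ∈ S i) → hol (.mk p) = (e i y)⁻¹ * e i x := by
  obtain ⟨T, T_trans, T_of_mem⟩ := exists_transport hSo hcov he
  have T_mul {x y : X} (p : Path.Homotopic.Quotient x y) : ∀ g, T p g = T p 1 * g := by
    induction p using pathClass_induction hSo hcov with
    | trans p q hp hq =>
      intro g
      rw [T_trans, hp, hq, T_trans, hq (T p 1), mul_assoc]
    | of_mem i p hp =>
      intro g
      rw [T_of_mem i p hp, T_of_mem i p hp, mul_one]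
  exact ⟨fun p ↦ T p 1, fun p q ↦ (T_trans p q 1).trans (T_mul q _),
    fun i _ _ p hp ↦ (T_of_mem i p hp 1).trans (mul_one _)⟩

end Holonomy

section Union

variable {X : Type*} [TopologicalSpace X] {U V : Set X} {x₀ : X}

lemma zerothHomotopy_mk_eq_iff_joinedIn {W : Set X} {x y : W} :
    ZerothHomotopy.mk x = .mk y ↔ JoinedIn W x y :=
  Quotient.eq.trans (joinedIn_iff_joined x.2 y.2).symm

open Classical in
lemma exists_monoidHom_transitionLoop [LocallyPathConnectedSpace X] {G : Type*} [Group G]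
    (hU : IsOpen U) (hV : IsOpen V) (hUs : IsSimplyConnected U) (hVs : IsSimplyConnected V)
    (hcov : U ∪ V = univ) (h₀ : x₀ ∈ U ∩ V) (a : ZerothHomotopy ↥(U ∩ V) → G) :
    ∃ ψ : FundamentalGroup X x₀ →* G, ∀ z (hz : z ∈ U ∩ V),
      ψ (transitionLoop hUs hVs h₀.1 h₀.2 hz.1 hz.2) =
        (a (.mk ⟨x₀, h₀⟩))⁻¹ * a (.mk ⟨z, hz⟩) := by
  let S (b : Bool) : Set X := cond b U V
  let e (b : Bool) (x : X) : G := cond b 1 (if hx : x ∈ U ∩ V then a (.mk ⟨x, hx⟩) else 1)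
  have locallyConst (x : X) (hx : x ∈ U ∩ V) : ∀ᶠ y in 𝓝 x, e false y = e false x := by
    filter_upwards [pathComponentIn_mem_nhds ((hU.inter hV).mem_nhds hx)] with y hy
    have hy' : y ∈ U ∩ V := JoinedIn.target_mem hy
    simp only [e, dif_pos hx, dif_pos hy', cond_false,
      zerothHomotopy_mk_eq_iff_joinedIn (x := ⟨x, hx⟩) (y := ⟨y, hy'⟩) |>.mpr hy]
  have hSo (b : Bool) : IsOpen (S b) := by cases b <;> assumption
  have hScov : ⋃ b, S b = univ := union_eq_iUnion.symm.trans hcov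
  obtain ⟨hol, hol_trans, hol_of_mem⟩ := exists_holonomy (e := e) hSo hScov fun i j x hx ↦ by
    rcases i <;> rcases j
    · filter_upwards with y; simp
    · filter_upwards [locallyConst x hx.symm] with y hy; rw [hy]; rfl
    · filter_upwards [locallyConst x hx] with y hy; rw [hy]; rfl
    · filter_upwards with y; simp
  refine ⟨.mk' hol fun p q ↦ hol_trans q p, fun z hz ↦ ?_⟩
  have hol_U := hol_of_mem true _ (hUs.isPathConnected.joinedIn x₀ h₀.1 z hz.1).somePath_mem
  have hol_V := hol_of_mem false _ (hVs.isPathConnected.joinedIn z hz.2 x₀ h₀.2).somePath_mem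
  change hol ((pathClassIn hUs h₀.1 hz.1).trans (pathClassIn hVs hz.2 h₀.2)) = _
  rw [hol_trans, pathClassIn, pathClassIn, hol_U, hol_V]
  simp only [e, cond_true, cond_false, dif_pos hz, dif_pos h₀, inv_one, mul_one]

lemma lift_transitionLoop_surjective (hU : IsOpen U) (hV : IsOpen V) (hUs : IsSimplyConnected U)
    (hVs : IsSimplyConnected V) (hcov : U ∪ V = univ) (h₀ : x₀ ∈ U ∩ V)
    {rep : ZerothHomotopy ↥(U ∩ V) → ↥(U ∩ V)} (hrep : Function.RightInverse rep .mk)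
    {J : Set (ZerothHomotopy ↥(U ∩ V))} (hJ : insert (.mk ⟨x₀, h₀⟩) J = univ) :
    Function.Surjective (FreeGroup.lift fun C : J ↦
      transitionLoop hUs hVs h₀.1 h₀.2 (rep C).2.1 (rep C).2.2) := by
  set φ := FreeGroup.lift fun C : J ↦ transitionLoop hUs hVs h₀.1 h₀.2 (rep C).2.1 (rep C).2.2
  have mem_range (z : X) (hz : z ∈ U ∩ V) :
      transitionLoop hUs hVs h₀.1 h₀.2 hz.1 hz.2 ∈ φ.range := by
    rcases hJ.ge (mem_univ (.mk ⟨z, hz⟩)) with h | h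
    · rw [transitionLoop_eq_of_joinedIn hUs hVs h₀.1 h₀.2 hz h₀
        (zerothHomotopy_mk_eq_iff_joinedIn.mp h), transitionLoop, pathClassIn_self,
        pathClassIn_self, Path.Homotopic.Quotient.refl_trans]
      exact φ.range.one_mem
    · refine ⟨.of ⟨_, h⟩, ?_⟩
      rw [FreeGroup.lift_apply_of]
      exact transitionLoop_eq_of_joinedIn hUs hVs h₀.1 h₀.2 (rep _).2 hz
        (zerothHomotopy_mk_eq_iff_joinedIn.mp (hrep _))
  refine MonoidHom.range_eq_top.mp (subgroup_eq_top_of_transitionLoop_mem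
    (S := fun b ↦ cond b U V) (fun b ↦ by cases b <;> assumption)
    (union_eq_iUnion.symm.trans hcov) (fun b ↦ by cases b <;> assumption)
    (fun b ↦ by cases b; exacts [h₀.2, h₀.1]) _ fun i j z hi hj ↦ ?_)
  rcases i <;> rcases j
  · exact transitionLoop_same hVs .. ▸ φ.range.one_mem
  · exact transitionLoop_swap hUs hVs h₀.1 h₀.2 hj hi ▸ φ.range.inv_mem (mem_range z ⟨hj, hi⟩)
  · exact mem_range z ⟨hi, hj⟩
  · exact transitionLoop_same hUs .. ▸ φ.range.one_mem

theorem nonempty_freeGroup_mulEquiv_fundamentalGroup [LocallyPathConnectedSpace X]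
    (hU : IsOpen U) (hV : IsOpen V) (hUs : IsSimplyConnected U) (hVs : IsSimplyConnected V)
    (hcov : U ∪ V = univ) (h₀ : x₀ ∈ U ∩ V) :
    Nonempty (FreeGroup ({.mk ⟨x₀, h₀⟩}ᶜ : Set (ZerothHomotopy ↥(U ∩ V))) ≃*
      FundamentalGroup X x₀) := by
  classical
  set J : Set (ZerothHomotopy ↥(U ∩ V)) := {.mk ⟨x₀, h₀⟩}ᶜ with hJ
  obtain ⟨ψ, hψ⟩ := exists_monoidHom_transitionLoop hU hV hUs hVs hcov h₀
    fun C ↦ if h : C ∈ J then FreeGroup.of (⟨C, h⟩ : J) else 1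
  obtain ⟨rep, hrep⟩ := (ZerothHomotopy.mk_surjective (X := ↥(U ∩ V))).hasRightInverse
  set φ := FreeGroup.lift fun C : J ↦
    transitionLoop hUs hVs h₀.1 h₀.2 (rep C).2.1 (rep C).2.2 with hφ
  have ψ_comp_φ : ψ.comp φ = MonoidHom.id _ := by
    ext C
    simp only [hφ, MonoidHom.comp_apply, FreeGroup.lift_apply_of, hψ _ (rep C).2,
      Subtype.coe_eta, hrep C.1]
    simp [hJ]
  exact ⟨.ofBijective φ ⟨Function.LeftInverse.injective (DFunLike.congr_fun ψ_comp_φ),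
    lift_transitionLoop_surjective hU hV hUs hVs hcov h₀ hrep (by simp [hJ, insert_eq])⟩⟩

lemma eq_one_of_pow_mem_center_of_nontrivial_zerothHomotopy [LocallyPathConnectedSpace X]
    (hU : IsOpen U) (hV : IsOpen V) (hUs : IsSimplyConnected U) (hVs : IsSimplyConnected V)
    (hcov : U ∪ V = univ) (h₀ : x₀ ∈ U ∩ V)
    (hUV : ({.mk ⟨x₀, h₀⟩}ᶜ : Set (ZerothHomotopy ↥(U ∩ V))).Nontrivial)
    {γ : FundamentalGroup X x₀} {k : ℕ} (hk : k ≠ 0) (hγ : γ ^ k ∈ Subgroup.center _) :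
    γ = 1 := by
  have := nontrivial_coe_sort.mpr hUV
  obtain ⟨φ⟩ := nonempty_freeGroup_mulEquiv_fundamentalGroup hU hV hUs hVs hcov h₀
  rw [← φ.symm.map_eq_one_iff]
  exact freeGroup_eq_one_of_pow_mem_center hk (map_pow φ.symm γ k ▸
    (MulEquivClass.apply_mem_center_iff φ.symm).mpr hγ)

end Union

section PuncturedPlane

lemma contractibleSpace_of_segment_subset {E : Type*} [AddCommGroup E] [Module ℝ E]
    [TopologicalSpace E] [IsTopologicalAddGroup E] [ContinuousSMul ℝ E] {W : Set E} {r : E → E}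
    {c : E} (hr : Continuous r) (hc : c ∈ W) (hWr : ∀ z ∈ W, segment ℝ z (r z) ⊆ W)
    (hrc : ∀ z ∈ W, segment ℝ (r z) c ⊆ W) : ContractibleSpace W := by
  have lineMap_mem {a b : E} (h : segment ℝ a b ⊆ W) (t : unitInterval) :
      AffineMap.lineMap a b (t : ℝ) ∈ W :=
    h (segment_eq_image_lineMap ℝ a b ▸ mem_image_of_mem _ t.2)
  let r' : C(W, W) := ⟨fun z ↦ ⟨r z, hWr z z.2 (right_mem_segment ..)⟩, by fun_prop⟩
  have id_r : (ContinuousMap.id W).Homotopic r' :=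
    ⟨{ toFun p := ⟨AffineMap.lineMap (p.2 : E) (r p.2) (p.1 : ℝ), lineMap_mem (hWr _ p.2.2) _⟩
       map_zero_left z := Subtype.ext (by simp)
       map_one_left z := Subtype.ext (by simp [r']) }⟩
  have r_const : r'.Homotopic (.const W ⟨c, hc⟩) :=
    ⟨{ toFun p := ⟨AffineMap.lineMap (r p.2) c (p.1 : ℝ), lineMap_mem (hrc _ p.2.2) _⟩
       map_zero_left z := Subtype.ext (by simp [r'])
       map_one_left z := Subtype.ext (by simp) }⟩
  exact (contractible_iff_id_nullhomotopic W).mpr ⟨_, id_r.trans r_const⟩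

/-- The complement in the plane of the closed vertical rays descending from the points of `Q`. -/
def descendingRaysCompl (Q : Set (ℝ × ℝ)) : Set (ℝ × ℝ) :=
  {z | ∀ q ∈ Q, z.1 = q.1 → q.2 < z.2}

lemma isOpen_descendingRaysCompl {Q : Set (ℝ × ℝ)} (hQ : Q.Finite) :
    IsOpen (descendingRaysCompl Q) := by
  have : descendingRaysCompl Q = ⋂ q ∈ Q, {z | z.1 ≠ q.1} ∪ {z | q.2 < z.2} := by
    ext z
    simp [descendingRaysCompl, imp_iff_not_or]
  rw [this]
  exact hQ.isOpen_biInter fun q _ ↦ (isOpen_ne_fun continuous_fst continuous_const).union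
    (isOpen_lt continuous_const continuous_snd)

lemma isSimplyConnected_descendingRaysCompl {Q : Set (ℝ × ℝ)} (hQ : Q.Finite) :
    IsSimplyConnected (descendingRaysCompl Q) := by
  obtain ⟨M, hM⟩ := (hQ.image Prod.snd).bddAbove
  have snd_lt {q : ℝ × ℝ} (hq : q ∈ Q) : q.2 < M + 1 := by
    linarith [hM (mem_image_of_mem Prod.snd hq)]
  have above_subset : univ ×ˢ Ici (M + 1) ⊆ descendingRaysCompl Q :=
    fun z hz q hq _ ↦ (snd_lt hq).trans_le hz.2
  have : ContractibleSpace (descendingRaysCompl Q) := by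
    refine contractibleSpace_of_segment_subset (r := fun z ↦ (z.1, max z.2 (M + 1)))
      (c := (0, M + 1)) (by fun_prop) (above_subset ⟨trivial, self_mem_Ici⟩) (fun z hz ↦ ?_)
      fun z _ ↦ ((convex_univ.prod (convex_Ici _)).segment_subset
        ⟨trivial, mem_Ici.mpr (le_max_right _ _)⟩ ⟨trivial, self_mem_Ici⟩).trans above_subset
    rw [← Prod.image_mk_segment_right, segment_eq_Icc (le_max_left _ _)]
    rintro _ ⟨y, hy, rfl⟩ q hq hzq
    exact (hz q hq hzq).trans_le hy.1
  exact (inferInstance : SimplyConnectedSpace (descendingRaysCompl Q))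

/-- The reflection of the plane in the horizontal axis. -/
def reflection : ℝ × ℝ ≃ₜ ℝ × ℝ := (Homeomorph.refl ℝ).prodCongr (Homeomorph.neg ℝ)

/-- The complement in the plane of the closed vertical rays ascending from the points of `Q`. -/
def ascendingRaysCompl (Q : Set (ℝ × ℝ)) : Set (ℝ × ℝ) :=
  {z | ∀ q ∈ Q, z.1 = q.1 → z.2 < q.2}

lemma ascendingRaysCompl_eq_preimage (Q : Set (ℝ × ℝ)) :
    ascendingRaysCompl Q = reflection ⁻¹' descendingRaysCompl (reflection '' Q) := by
  ext z
  refine Iff.trans ?_ forall_mem_image.symm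
  exact forall₂_congr fun q _ ↦ imp_congr_right fun _ ↦ neg_lt_neg_iff.symm

lemma isOpen_ascendingRaysCompl {Q : Set (ℝ × ℝ)} (hQ : Q.Finite) :
    IsOpen (ascendingRaysCompl Q) := by
  rw [ascendingRaysCompl_eq_preimage]
  exact (isOpen_descendingRaysCompl (hQ.image _)).preimage reflection.continuous

lemma isSimplyConnected_ascendingRaysCompl {Q : Set (ℝ × ℝ)} (hQ : Q.Finite) :
    IsSimplyConnected (ascendingRaysCompl Q) := by
  rw [ascendingRaysCompl_eq_preimage, reflection.isSimplyConnected_preimage]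
  exact isSimplyConnected_descendingRaysCompl (hQ.image _)

lemma descendingRaysCompl_inter_ascendingRaysCompl (Q : Set (ℝ × ℝ)) :
    descendingRaysCompl Q ∩ ascendingRaysCompl Q = Prod.fst ⁻¹' (Prod.fst '' Q)ᶜ := by
  ext z
  refine ⟨?_, fun hz ↦ ⟨?_, ?_⟩⟩
  · rintro ⟨hdesc, hasc⟩ ⟨q, hq, hqz⟩
    exact (hdesc q hq hqz.symm).not_gt (hasc q hq hqz.symm)
  all_goals exact fun q hq hzq ↦ absurd ⟨q, hq, hzq.symm⟩ hz

lemma descendingRaysCompl_union_ascendingRaysCompl {Q : Set (ℝ × ℝ)} (hQ : InjOn Prod.fst Q) :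
    descendingRaysCompl Q ∪ ascendingRaysCompl Q = Qᶜ := by
  ext z
  constructor
  · rintro (hz | hz) hzQ
    exacts [(hz z hzQ rfl).false, (hz z hzQ rfl).false]
  · intro hzQ
    by_cases hcol : ∃ q ∈ Q, z.1 = q.1
    · obtain ⟨q, hq, hzq⟩ := hcol
      have unique {q' : ℝ × ℝ} (hq' : q' ∈ Q) (h : z.1 = q'.1) : q' = q :=
        hQ hq' hq (h.symm.trans hzq)
      have hne : z.2 ≠ q.2 := fun h ↦ hzQ (Prod.ext hzq h ▸ hq)
      rcases hne.lt_or_gt with h | h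
      · exact .inr fun q' hq' h' ↦ unique hq' h' ▸ h
      · exact .inl fun q' hq' h' ↦ unique hq' h' ▸ h
    · exact .inl fun q hq h ↦ absurd ⟨q, hq, h⟩ hcol

lemma mem_image_of_joinedIn {X : Type*} [TopologicalSpace X] {s : Set X} {x y : X}
    (h : JoinedIn s x y) {f : X → ℝ} (hf : Continuous f) {c : ℝ} (hx : f x ≤ c) (hy : c ≤ f y) :
    c ∈ f '' s := by
  obtain ⟨t, ht⟩ := mem_range_of_exists_le_of_exists_ge (hf.comp h.somePath.continuous)
    ⟨0, by simpa using hx⟩ ⟨1, by simpa using hy⟩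
  exact ⟨_, h.somePath_mem t, ht⟩

lemma nontrivial_compl_singleton {α : Type*} {a b c : α} (hab : a ≠ b) (hac : a ≠ c)
    (hbc : b ≠ c) (x : α) : ({x}ᶜ : Set α).Nontrivial := by
  rcases eq_or_ne a x with rfl | hax
  · exact ⟨b, hab.symm, c, hac.symm, hbc⟩
  rcases eq_or_ne b x with rfl | hbx
  · exact ⟨a, hax, c, hbc.symm, hac⟩
  · exact ⟨a, hax, b, hbx, hab⟩

lemma nontrivial_compl_singleton_zerothHomotopy {X : Type*} [TopologicalSpace X] {f : X → ℝ}
    (hf : Continuous f) {A : Set ℝ} (hA : A.Finite) (hA₂ : A.Nontrivial) (hAf : Aᶜ ⊆ range f)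
    (C : ZerothHomotopy ↥(f ⁻¹' Aᶜ)) : ({C}ᶜ : Set (ZerothHomotopy ↥(f ⁻¹' Aᶜ))).Nontrivial := by
  obtain ⟨a, ha, b, hb, hab⟩ := hA₂.exists_lt
  have component_ne {x y : X} (hx : f x ∈ Aᶜ) (hy : f y ∈ Aᶜ) {c : ℝ} (hc : c ∈ A) (hxc : f x < c)
      (hcy : c < f y) : ZerothHomotopy.mk (⟨x, hx⟩ : f ⁻¹' Aᶜ) ≠ .mk ⟨y, hy⟩ := by
    intro h
    obtain ⟨z, hz, rfl⟩ :=
      mem_image_of_joinedIn (zerothHomotopy_mk_eq_iff_joinedIn.mp h) hf hxc.le hcy.le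
    exact hz hc
  obtain ⟨u, hua, huA⟩ := (Iio_infinite a).exists_notMem_finite hA
  obtain ⟨v, ⟨hav, hvb⟩, hvA⟩ := (Ioo_infinite hab).exists_notMem_finite hA
  obtain ⟨w, hbw, hwA⟩ := (Ioi_infinite b).exists_notMem_finite hA
  obtain ⟨⟨x, rfl⟩, ⟨y, rfl⟩, ⟨z, rfl⟩⟩ := And.intro (hAf huA) (And.intro (hAf hvA) (hAf hwA))
  exact nontrivial_compl_singleton (component_ne huA hvA ha hua hav)
    (component_ne huA hwA ha hua (hab.trans hbw)) (component_ne hvA hwA hb hvb hbw) C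

lemma isSimplyConnected_preimage_of_isEmbedding {X Y : Type*} [TopologicalSpace X]
    [TopologicalSpace Y] {j : X → Y} (hj : IsEmbedding j) {W : Set Y} (hW : W ⊆ range j)
    (h : IsSimplyConnected W) : IsSimplyConnected (j ⁻¹' W) := by
  rwa [← hj.isSimplyConnected_image, image_preimage_eq_of_subset hW]

lemma eq_one_of_pow_mem_center_of_injOn_fst {X : Type*} [TopologicalSpace X]
    {j : X → ℝ × ℝ} (hj : IsEmbedding j) {Q : Set (ℝ × ℝ)} (hrange : range j = Qᶜ) (hQ : Q.Finite)
    (hQ₂ : Q.Nontrivial) {x₀ : X} (hinj : InjOn Prod.fst (insert (j x₀) Q))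
    {γ : FundamentalGroup X x₀} {k : ℕ} (hk : k ≠ 0) (hγ : γ ^ k ∈ Subgroup.center _) :
    γ = 1 := by
  have hQinj : InjOn Prod.fst Q := hinj.mono (subset_insert _ _)
  have hx₀ : j x₀ ∉ Q := hrange.le ⟨x₀, rfl⟩
  have hunion := descendingRaysCompl_union_ascendingRaysCompl hQinj
  have hinter : j ⁻¹' descendingRaysCompl Q ∩ j ⁻¹' ascendingRaysCompl Q =
      (Prod.fst ∘ j) ⁻¹' (Prod.fst '' Q)ᶜ := by
    rw [← preimage_inter, descendingRaysCompl_inter_ascendingRaysCompl]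
    rfl
  have h₀ : x₀ ∈ j ⁻¹' descendingRaysCompl Q ∩ j ⁻¹' ascendingRaysCompl Q := by
    rw [hinter]
    rintro ⟨q, hq, h⟩
    exact hx₀ (hinj (.inr hq) (.inl rfl) h ▸ hq)
  have : LocallyPathConnectedSpace X :=
    (IsOpenEmbedding.mk hj (hrange ▸ hQ.isClosed.isOpen_compl)).locallyPathConnectedSpace
  have hcomponents := nontrivial_compl_singleton_zerothHomotopy
    (continuous_fst.comp hj.continuous) (hQ.image _) (hQ₂.image_of_injOn hQinj) fun c hc ↦ by
      obtain ⟨x, hx⟩ : (c, 0) ∈ range j := hrange.ge fun h ↦ hc ⟨_, h, rfl⟩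
      exact ⟨x, by simp [hx]⟩
  rw [← hinter] at hcomponents
  refine eq_one_of_pow_mem_center_of_nontrivial_zerothHomotopy
    ((isOpen_descendingRaysCompl hQ).preimage hj.continuous)
    ((isOpen_ascendingRaysCompl hQ).preimage hj.continuous)
    (isSimplyConnected_preimage_of_isEmbedding hj ?_ (isSimplyConnected_descendingRaysCompl hQ))
    (isSimplyConnected_preimage_of_isEmbedding hj ?_ (isSimplyConnected_ascendingRaysCompl hQ))
    (by rw [← preimage_union, hunion, ← hrange, preimage_range]) h₀ (hcomponents _) hk hγ
  all_goals rw [hrange, ← hunion]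
  exacts [subset_union_left, subset_union_right]

/-- The shear `(x, y) ↦ (x + ε * y, y)` of the plane. -/
def shear (ε : ℝ) : ℝ × ℝ ≃ₜ ℝ × ℝ where
  toFun z := (z.1 + ε * z.2, z.2)
  invFun z := (z.1 - ε * z.2, z.2)
  left_inv z := by simp
  right_inv z := by simp

lemma exists_injOn_fst_shear {P : Set (ℝ × ℝ)} (hP : P.Finite) :
    ∃ ε, InjOn Prod.fst (shear ε '' P) := by
  have subsingleton {a b : ℝ × ℝ} (hab : a ≠ b) :
      {ε | (shear ε a).1 = (shear ε b).1}.Subsingleton := by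
    intro ε (hε : a.1 + ε * a.2 = b.1 + ε * b.2) ε' (hε' : a.1 + ε' * a.2 = b.1 + ε' * b.2)
    have hprod : (ε - ε') * (a.2 - b.2) = 0 := by linear_combination hε - hε'
    rcases mul_eq_zero.mp hprod with h | h
    · exact sub_eq_zero.mp h
    · have h₂ : a.2 = b.2 := sub_eq_zero.mp h
      exact absurd (Prod.ext (by simpa [h₂] using hε) h₂) hab
  have finite_bad : (⋃ p ∈ P.offDiag, {ε | (shear ε p.1).1 = (shear ε p.2).1}).Finite :=
    hP.offDiag.biUnion fun p hp ↦ (subsingleton hp.2.2).finite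
  obtain ⟨ε, hε⟩ := finite_bad.exists_notMem
  refine ⟨ε, InjOn.image_of_comp fun a ha b hb h ↦ by_contra fun hab ↦ hε ?_⟩
  exact mem_biUnion (x := (a, b)) ⟨ha, hb, hab⟩ h

theorem eq_one_of_pow_mem_center_fundamentalGroup_compl {Q : Set (ℝ × ℝ)} (hQ : Q.Finite)
    (hQ₂ : Q.Nontrivial) {x₀ : ↥Qᶜ} {γ : FundamentalGroup ↥Qᶜ x₀} {k : ℕ} (hk : k ≠ 0)
    (hγ : γ ^ k ∈ Subgroup.center _) : γ = 1 := by
  obtain ⟨ε, hε⟩ := exists_injOn_fst_shear (hQ.insert x₀.1)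
  rw [image_insert_eq] at hε
  exact eq_one_of_pow_mem_center_of_injOn_fst (j := shear ε ∘ Subtype.val)
    ((shear ε).isEmbedding.comp .subtypeVal)
    (by rw [range_comp, Subtype.range_coe, image_compl_eq (shear ε).bijective]) (hQ.image _)
    (hQ₂.image (shear ε).injective) hε hk hγ

end PuncturedPlane

section TraceLoop

variable {X : Type*} [TopologicalSpace X] {g g' : C(X, X)} {x₀ : X}

lemma mapOfEq_mk {Y : Type*} [TopologicalSpace Y] (f : C(X, Y)) {y₀ : Y} (h : f x₀ = y₀)
    (p : Path x₀ x₀) :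
    FundamentalGroup.mapOfEq f h (.mk p) = .mk ((p.map f.continuous).cast h.symm h.symm) :=
  FundamentalGroup.mapOfEq_apply f h (.mk p)

/-- The class of the loop described by a fixed point `x₀` of `g` under a homotopy from the identity
to `g`. -/
def traceLoop (H : (ContinuousMap.id X).Homotopy g) (hx₀ : g x₀ = x₀) : FundamentalGroup X x₀ :=
  .mk ((H.evalAt x₀).cast rfl hx₀.symm)

lemma traceLoop_mul (H : (ContinuousMap.id X).Homotopy g) (hx₀ : g x₀ = x₀)
    (δ : FundamentalGroup X x₀) :
    traceLoop H hx₀ * δ = FundamentalGroup.mapOfEq g hx₀ δ * traceLoop H hx₀ := by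
  obtain ⟨p, rfl⟩ := Path.Homotopic.Quotient.mk_surjective δ
  rw [mapOfEq_mk]
  exact congrArg (Path.Homotopic.Quotient.cast · rfl hx₀.symm)
    (Path.Homotopic.Quotient.eq.mpr (Path.Homotopic.map_trans_evalAt H p))

lemma traceLoop_eq_one {H : (ContinuousMap.id X).Homotopy g} (hH : ∀ t, H (t, x₀) = x₀)
    (hx₀ : g x₀ = x₀) : traceLoop H hx₀ = 1 :=
  congrArg Path.Homotopic.Quotient.mk (Path.ext (funext hH))

lemma traceLoop_pow_mul (H : (ContinuousMap.id X).Homotopy g) (hx₀ : g x₀ = x₀) (n : ℕ)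
    (δ : FundamentalGroup X x₀) : traceLoop H hx₀ ^ n * δ =
      (FundamentalGroup.mapOfEq g hx₀)^[n] δ * traceLoop H hx₀ ^ n := by
  induction n generalizing δ with
  | zero => simp
  | succ n ih =>
    rw [pow_succ, mul_assoc, traceLoop_mul, ← mul_assoc, ih, mul_assoc,
      Function.iterate_succ_apply]

lemma iterate_mapOfEq_mk (hx₀ : g x₀ = x₀) (n : ℕ) (p q : Path x₀ x₀)
    (hq : ∀ t, q t = g^[n] (p t)) :
    (FundamentalGroup.mapOfEq g hx₀)^[n] (.mk p) = .mk q := by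
  induction n generalizing p with
  | zero => exact congrArg Path.Homotopic.Quotient.mk (Path.ext (funext fun t ↦ (hq t).symm))
  | succ n ih =>
    rw [Function.iterate_succ_apply, mapOfEq_mk]
    exact ih ((p.map g.continuous).cast hx₀.symm hx₀.symm) hq

lemma mapOfEq_eq_self (K : (ContinuousMap.id X).Homotopy g) (hK : ∀ t, K (t, x₀) = x₀)
    (hx₀ : g x₀ = x₀) (δ : FundamentalGroup X x₀) : FundamentalGroup.mapOfEq g hx₀ δ = δ := by
  simpa only [traceLoop_eq_one hK, one_mul, mul_one] using (traceLoop_mul K hx₀ δ).symm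

theorem traceLoop_pow_mem_center (H : (ContinuousMap.id X).Homotopy g) (hx₀ : g x₀ = x₀) {k : ℕ}
    (K : (ContinuousMap.id X).Homotopy g') (hg' : g' = g^[k]) (hK : ∀ t, K (t, x₀) = x₀) :
    traceLoop H hx₀ ^ k ∈ Subgroup.center (FundamentalGroup X x₀) := by
  have hx₀' : g' x₀ = x₀ := (K.apply_one x₀).symm.trans (hK 1)
  have map_iterate_eq (δ : FundamentalGroup X x₀) :
      (FundamentalGroup.mapOfEq g hx₀)^[k] δ = FundamentalGroup.mapOfEq g' hx₀' δ := by
    obtain ⟨p, rfl⟩ := Path.Homotopic.Quotient.mk_surjective δ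
    rw [mapOfEq_mk]
    exact iterate_mapOfEq_mk hx₀ k p _ fun t ↦ congrFun hg' (p t)
  refine Subgroup.mem_center_iff.mpr fun δ ↦ ?_
  rw [traceLoop_pow_mul, map_iterate_eq, mapOfEq_eq_self K hK]

end TraceLoop

section DiscreteComplement

lemma exists_radius_norm_ne {E : Type*} [NormedAddCommGroup E] {P : Set E}
    (hP : ∀ R, (P ∩ Metric.closedBall 0 R).Finite) (R₀ : ℝ) :
    ∃ R, R₀ < R ∧ ∀ z ∈ P, ‖z‖ ≠ R := by
  obtain ⟨R, ⟨hR₀, hR₁⟩, hR⟩ :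
      (Ioo R₀ (R₀ + 1) \ norm '' (P ∩ Metric.closedBall 0 (R₀ + 1))).Nonempty :=
    ((Ioo_infinite (lt_add_one R₀)).sdiff ((hP _).image _)).nonempty
  exact ⟨R, hR₀, fun z hz h ↦ hR ⟨z, ⟨hz, mem_closedBall_zero_iff.mpr (h ▸ hR₁.le)⟩, h⟩⟩

/-- The retraction of a real normed space onto the closed ball of radius `R > 0` about the origin
which pushes every point outside the ball radially to its boundary sphere. -/
noncomputable def radialRetraction {E : Type*} [NormedAddCommGroup E] [NormedSpace ℝ E]
    (R : ℝ) (z : E) : E :=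
  (R / max R ‖z‖) • z

variable {E : Type*} [NormedAddCommGroup E] [NormedSpace ℝ E] {R : ℝ} {z : E}

lemma continuous_radialRetraction (hR : 0 < R) :
    Continuous (radialRetraction R : E → E) :=
  (continuous_const.div (by fun_prop) fun _ ↦ (lt_max_of_lt_left hR).ne').smul continuous_id

lemma radialRetraction_of_norm_le (hR : 0 < R) (hz : ‖z‖ ≤ R) : radialRetraction R z = z := by
  rw [radialRetraction, max_eq_left hz, div_self hR.ne', one_smul]

lemma norm_radialRetraction (hR : 0 < R) (hz : R ≤ ‖z‖) : ‖radialRetraction R z‖ = R := by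
  rw [radialRetraction, max_eq_right hz, norm_smul, norm_div, norm_norm,
    Real.norm_of_nonneg hR.le, div_mul_cancel₀ _ (hR.trans_le hz).ne']

lemma le_norm_lineMap_radialRetraction (hR : 0 < R) (hz : R ≤ ‖z‖) (t : unitInterval) :
    R ≤ ‖AffineMap.lineMap z (radialRetraction R z) (t : ℝ)‖ := by
  have hz₀ : 0 < ‖z‖ := hR.trans_le hz
  have hcoeff : 0 ≤ 1 - (t : ℝ) + t * (R / ‖z‖) :=
    add_nonneg (unitInterval.one_minus_nonneg t)
      (mul_nonneg (unitInterval.nonneg t) (div_pos hR hz₀).le)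
  rw [AffineMap.lineMap_apply_module, radialRetraction, max_eq_right hz, smul_smul, ← add_smul,
    norm_smul, Real.norm_of_nonneg hcoeff, add_mul, mul_assoc, div_mul_cancel₀ _ hz₀.ne']
  nlinarith [unitInterval.one_minus_nonneg t]

/-- The inclusion of `Pᶜ` into the complement of the part of `P` in a ball. -/
def inclusionCompl (P : Set E) (R : ℝ) : C(↥Pᶜ, ↥(P ∩ Metric.closedBall 0 R)ᶜ) :=
  ⟨inclusion (compl_subset_compl.mpr inter_subset_left), continuous_inclusion _⟩

variable {P : Set E}

lemma radialRetraction_notMem (hR : 0 < R) (hRP : ∀ z ∈ P, ‖z‖ ≠ R)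
    (hz : z ∉ P ∩ Metric.closedBall 0 R) : radialRetraction R z ∉ P := by
  rcases le_or_gt ‖z‖ R with h | h
  · rw [radialRetraction_of_norm_le hR h]
    exact fun hP ↦ hz ⟨hP, mem_closedBall_zero_iff.mpr h⟩
  · exact fun hP ↦ hRP _ hP (norm_radialRetraction hR h.le)

/-- The restriction of the radial retraction to a map from the complement of
`P ∩ closedBall 0 R` to `Pᶜ`. -/
noncomputable def retractionCompl (hR : 0 < R) (hRP : ∀ z ∈ P, ‖z‖ ≠ R) :
    C(↥(P ∩ Metric.closedBall 0 R)ᶜ, ↥Pᶜ) :=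
  ⟨fun z ↦ ⟨radialRetraction R z.1, radialRetraction_notMem hR hRP z.2⟩,
    ((continuous_radialRetraction hR).comp continuous_subtype_val).subtype_mk _⟩

lemma lineMap_radialRetraction_notMem (hR : 0 < R) (hRP : ∀ z ∈ P, ‖z‖ ≠ R)
    (hz : z ∉ P ∩ Metric.closedBall 0 R) (t : unitInterval) :
    AffineMap.lineMap z (radialRetraction R z) (t : ℝ) ∉ P ∩ Metric.closedBall 0 R := by
  rcases le_or_gt ‖z‖ R with h | h
  · rwa [radialRetraction_of_norm_le hR h, AffineMap.lineMap_same_apply]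
  · exact fun hmem ↦ hRP _ hmem.1 (le_antisymm (mem_closedBall_zero_iff.mp hmem.2)
      (le_norm_lineMap_radialRetraction hR h.le t))

/-- The straight-line homotopy from the identity to the radial retraction, on the complement of
`P ∩ closedBall 0 R`. -/
noncomputable def retractionComplHomotopy (hR : 0 < R) (hRP : ∀ z ∈ P, ‖z‖ ≠ R) :
    (ContinuousMap.id ↥(P ∩ Metric.closedBall 0 R)ᶜ).Homotopy
      ((inclusionCompl P R).comp (retractionCompl hR hRP)) where
  toFun p := ⟨AffineMap.lineMap p.2.1 (radialRetraction R p.2.1) (p.1 : ℝ),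
    lineMap_radialRetraction_notMem hR hRP p.2.2 p.1⟩
  continuous_toFun := by
    have := continuous_radialRetraction (E := E) hR
    simp only [AffineMap.lineMap_apply_module]
    fun_prop
  map_zero_left z := Subtype.ext (by simp)
  map_one_left z := Subtype.ext (by simp [inclusionCompl, retractionCompl])

lemma retractionCompl_inclusionCompl (hR : 0 < R) (hRP : ∀ z ∈ P, ‖z‖ ≠ R) {z : ↥Pᶜ}
    (hz : ‖(z : E)‖ ≤ R) : retractionCompl hR hRP (inclusionCompl P R z) = z :=
  Subtype.ext (radialRetraction_of_norm_le hR hz)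

lemma map_inclusionCompl_surjective (hR : 0 < R) (hRP : ∀ z ∈ P, ‖z‖ ≠ R) {x₀ : ↥Pᶜ}
    (hx₀ : ‖(x₀ : E)‖ ≤ R) :
    Function.Surjective (FundamentalGroup.map (inclusionCompl P R) x₀) := by
  have hr := retractionCompl_inclusionCompl hR hRP hx₀
  have hfix (t : unitInterval) : retractionComplHomotopy hR hRP (t, inclusionCompl P R x₀) =
      inclusionCompl P R x₀ := Subtype.ext (by
    change AffineMap.lineMap (x₀ : E) (radialRetraction R (x₀ : E)) (t : ℝ) = x₀
    rw [radialRetraction_of_norm_le hR hx₀, AffineMap.lineMap_same_apply])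
  intro δ
  refine ⟨FundamentalGroup.mapOfEq (retractionCompl hR hRP) hr δ, ?_⟩
  conv_rhs => rw [← mapOfEq_eq_self _ hfix (congrArg (inclusionCompl P R) hr) δ]
  obtain ⟨p, rfl⟩ := Path.Homotopic.Quotient.mk_surjective δ
  rw [mapOfEq_mk, mapOfEq_mk]
  rfl

lemma homotopic_refl_of_map_inclusionCompl_eq_one (hR : 0 < R) (hRP : ∀ z ∈ P, ‖z‖ ≠ R) {x₀ : ↥Pᶜ}
    {p : Path x₀ x₀} (hp : ∀ t, ‖(p t : E)‖ ≤ R)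
    (h : FundamentalGroup.map (inclusionCompl P R) x₀ (.mk p) = 1) :
    p.Homotopic (Path.refl x₀) := by
  have hr := retractionCompl_inclusionCompl hR hRP (p.source ▸ hp 0)
  have hmap := congrArg (FundamentalGroup.mapOfEq (retractionCompl hR hRP) hr) h
  have hretract := mapOfEq_mk (retractionCompl hR hRP) hr (p.map (inclusionCompl P R).continuous)
  rw [map_one] at hmap
  convert Path.Homotopic.Quotient.eq.mp (hretract.symm.trans hmap) using 1
  exact Path.ext (funext fun t ↦ (retractionCompl_inclusionCompl hR hRP (hp t)).symm)

theorem eq_one_of_pow_mem_center_fundamentalGroup_compl_of_locallyFinite {P : Set (ℝ × ℝ)}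
    (hP : ∀ R, (P ∩ Metric.closedBall 0 R).Finite) (hP₂ : P.Nontrivial) {x₀ : ↥Pᶜ}
    {γ : FundamentalGroup ↥Pᶜ x₀} {k : ℕ} (hk : k ≠ 0) (hγ : γ ^ k ∈ Subgroup.center _) :
    γ = 1 := by
  obtain ⟨a, ha, b, hb, hab⟩ := hP₂
  obtain ⟨p, rfl⟩ := Path.Homotopic.Quotient.mk_surjective γ
  obtain ⟨B, hB⟩ : BddAbove (range fun t ↦ ‖(p t : ℝ × ℝ)‖) :=
    (isCompact_range (by fun_prop)).bddAbove
  obtain ⟨R, hR₀, hRP⟩ := exists_radius_norm_ne hP (max B (max ‖a‖ ‖b‖))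
  obtain ⟨hBR, haR, hbR⟩ : B < R ∧ ‖a‖ < R ∧ ‖b‖ < R := by simpa using hR₀
  have hR : 0 < R := (norm_nonneg a).trans_lt haR
  have hpR (t) : ‖(p t : ℝ × ℝ)‖ ≤ R := (hB ⟨t, rfl⟩).trans hBR.le
  refine Path.Homotopic.Quotient.eq.mpr (homotopic_refl_of_map_inclusionCompl_eq_one hR hRP hpR <|
    eq_one_of_pow_mem_center_fundamentalGroup_compl (hP R)
      ⟨a, ⟨ha, by simpa using haR.le⟩, b, ⟨hb, by simpa using hbR.le⟩, hab⟩ hk ?_)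
  rw [← map_pow]
  refine Subgroup.mem_center_iff.mpr fun δ ↦ ?_
  obtain ⟨δ, rfl⟩ := map_inclusionCompl_surjective hR hRP (p.source ▸ hpR 0) δ
  rw [← map_mul, ← map_mul, Subgroup.mem_center_iff.mp hγ δ]

end DiscreteComplement

section Isotopy

variable {X : Type*} [TopologicalSpace X]

/-- `H` is an isotopy starting at the identity and relative to `F`; its end `H (1, ·)` is left
free. -/
structure IsIsotopyRel (H : unitInterval × X → X) (F : Set X) : Prop where
  continuous : Continuous H
  isHomeomorph (t : unitInterval) : IsHomeomorph fun x ↦ H (t, x)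
  map_zero (x : X) : H (0, x) = x
  map_eq_self (t : unitInterval) {x : X} (hx : x ∈ F) : H (t, x) = x

lemma isotopicToIdRel_iff {f : X → X} {F : Set X} :
    IsotopicToIdRel f F ↔ ∃ H, IsIsotopyRel H F ∧ ∀ x, H (1, x) = f x :=
  ⟨fun ⟨H, hH, hHt, hH₀, hH₁, hHF⟩ ↦ ⟨H, ⟨hH, hHt, hH₀, fun t _ hx ↦ hHF t _ hx⟩, hH₁⟩,
    fun ⟨H, ⟨hH, hHt, hH₀, hHF⟩, hH₁⟩ ↦ ⟨H, hH, hHt, hH₀, hH₁, fun t _ hx ↦ hHF t hx⟩⟩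

lemma IsotopicToIdRel.mono {f : X → X} {F F' : Set X} (hF : F' ⊆ F) (h : IsotopicToIdRel f F) :
    IsotopicToIdRel f F' :=
  let ⟨H, hH, hHt, hH₀, hH₁, hHF⟩ := h
  ⟨H, hH, hHt, hH₀, hH₁, fun t x hx ↦ hHF t x (hF hx)⟩

namespace IsIsotopyRel

variable {H K : unitInterval × X → X} {F : Set X}

lemma mono {F' : Set X} (hH : IsIsotopyRel H F) (hF : F' ⊆ F) : IsIsotopyRel H F' :=
  ⟨hH.continuous, hH.isHomeomorph, hH.map_zero, fun t _ hx ↦ hH.map_eq_self t (hF hx)⟩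

lemma map_mem_compl (hH : IsIsotopyRel H F) (t : unitInterval) {x : X} (hx : x ∈ Fᶜ) :
    H (t, x) ∈ Fᶜ := fun hmem ↦ hx <|
  (hH.isHomeomorph t).injective (hH.map_eq_self t hmem) ▸ hmem

/-- The homeomorphism at time `t` of an isotopy relative to `F`, on the complement of `F`. -/
def restrictCompl (hH : IsIsotopyRel H F) (t : unitInterval) : C(↥Fᶜ, ↥Fᶜ) :=
  ⟨fun x ↦ ⟨H (t, x), hH.map_mem_compl t x.2⟩, by have := hH.continuous; fun_prop⟩

/-- An isotopy relative to `F`, as a homotopy on the complement of `F`. -/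
def homotopyCompl (hH : IsIsotopyRel H F) :
    (ContinuousMap.id ↥Fᶜ).Homotopy (hH.restrictCompl 1) where
  toFun p := ⟨H (p.1, p.2), hH.map_mem_compl p.1 p.2.2⟩
  continuous_toFun := by have := hH.continuous; fun_prop
  map_zero_left x := Subtype.ext (hH.map_zero x)
  map_one_left _ := rfl

lemma coe_iterate_restrictCompl (hH : IsIsotopyRel H F) (t : unitInterval) (n : ℕ) (x : ↥Fᶜ) :
    ((hH.restrictCompl t)^[n] x : X) = (fun x ↦ H (t, x))^[n] x :=
  Function.Semiconj.iterate_right (f := Subtype.val) (fun _ ↦ rfl) n x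

theorem traceLoop_pow_mem_center (hH : IsIsotopyRel H F) {x₀ : ↥Fᶜ}
    (hK : IsIsotopyRel K (insert ↑x₀ F)) (hx₀ : hH.restrictCompl 1 x₀ = x₀) {k : ℕ}
    (hHK : (fun x ↦ H (1, x))^[k] = fun x ↦ K (1, x)) :
    traceLoop hH.homotopyCompl hx₀ ^ k ∈ Subgroup.center (FundamentalGroup ↥Fᶜ x₀) := by
  have hK' := hK.mono (subset_insert _ _)
  refine _root_.traceLoop_pow_mem_center hH.homotopyCompl hx₀ hK'.homotopyCompl
    (funext fun x ↦ Subtype.ext ?_) fun t ↦ Subtype.ext (hK.map_eq_self t (mem_insert _ _))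
  exact (congrFun hHK x).symm.trans (hH.coe_iterate_restrictCompl 1 k x).symm

theorem traceLoop_eq_one {P : Set (ℝ × ℝ)}
    (hP : ∀ R, (P ∩ Metric.closedBall 0 R).Finite) (hP₂ : P.Nontrivial)
    {H K : unitInterval × (ℝ × ℝ) → ℝ × ℝ} (hH : IsIsotopyRel H P) {x₀ : ↥Pᶜ}
    (hK : IsIsotopyRel K (insert ↑x₀ P)) (hx₀ : hH.restrictCompl 1 x₀ = x₀) {k : ℕ} (hk : k ≠ 0)
    (hHK : (fun z ↦ H (1, z))^[k] = fun z ↦ K (1, z)) : traceLoop hH.homotopyCompl hx₀ = 1 :=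
  eq_one_of_pow_mem_center_fundamentalGroup_compl_of_locallyFinite hP hP₂ hk
    (hH.traceLoop_pow_mem_center hK hx₀ hHK)

end IsIsotopyRel

end Isotopy

section Tracing

variable {X : Type*} [TopologicalSpace X]

/-- `f` is the end of an isotopy from the identity, relative to `A`, along which the point `x`
follows the curve `c`. -/
def IsotopicToIdRelAlong (f : X → X) (A : Set X) (x : X) (c : unitInterval → X) : Prop :=
  ∃ H, IsIsotopyRel H A ∧ (∀ y, H (1, y) = f y) ∧ ∀ t, H (t, x) = c t

lemma IsotopicToIdRelAlong.isotopicToIdRel_insert {f : X → X} {A : Set X} {x : X}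
    (h : IsotopicToIdRelAlong f A x fun _ ↦ x) : IsotopicToIdRel f (insert x A) := by
  obtain ⟨H, hH, hH₁, hHx⟩ := h
  exact isotopicToIdRel_iff.mpr ⟨H, ⟨hH.continuous, hH.isHomeomorph, hH.map_zero,
    fun t _ hy ↦ hy.elim (fun hyx ↦ hyx ▸ hHx t) (hH.map_eq_self t)⟩, hH₁⟩

end Tracing

section Push

open scoped NNReal

lemma isHomeomorph_id_add_of_lipschitzWith {G : Type*} [NormedAddCommGroup G] [CompleteSpace G]
    {φ : G → G} {K : ℝ≥0} (hφ : LipschitzWith K φ) (hK : K < 1) :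
    IsHomeomorph fun z ↦ z + φ z := by
  have antilipschitz := AntilipschitzWith.id.add_lipschitzWith hφ (by rwa [inv_one])
  refine isHomeomorph_iff_isEmbedding_surjective.mpr
    ⟨(antilipschitz.isUniformEmbedding ?_).isEmbedding, fun w ↦ ?_⟩
  · exact (LipschitzWith.id.add hφ).uniformContinuous
  · have contracting : ContractingWith K fun z ↦ w - φ z :=
      ⟨hK, LipschitzWith.of_dist_le_mul fun z z' ↦ by
        simpa only [dist_sub_left] using hφ.dist_le_mul z z'⟩
    exact ⟨_, (sub_eq_iff_eq_add.mp contracting.fixedPoint_isFixedPt).symm⟩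

/-- The cone of height `1` over the ball of radius `ε` about `y`. -/
noncomputable def cone {G : Type*} [PseudoMetricSpace G] (ε : ℝ) (y z : G) : ℝ :=
  max 0 (1 - dist z y / ε)

lemma cone_self {G : Type*} [PseudoMetricSpace G] (ε : ℝ) (y : G) : cone ε y y = 1 := by
  simp [cone]

lemma cone_eq_zero {G : Type*} [PseudoMetricSpace G] {ε : ℝ} {y z : G} (hε : 0 < ε)
    (h : ε ≤ dist z y) : cone ε y z = 0 :=
  max_eq_left (sub_nonpos.mpr ((one_le_div hε).mpr h))

lemma dist_cone_le {G : Type*} [PseudoMetricSpace G] {ε : ℝ} (hε : 0 < ε) (y z w : G) :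
    dist (cone ε y z) (cone ε y w) ≤ dist z w / ε := by
  have hsub : (1 - dist z y / ε) - (1 - dist w y / ε) = (dist w y - dist z y) / ε := by ring
  rw [Real.dist_eq, cone, cone, max_comm 0, max_comm 0]
  refine (abs_max_sub_max_le_abs _ _ _).trans ?_
  rw [hsub, abs_div, abs_of_pos hε, dist_comm z w]
  gcongr
  exact abs_dist_sub_le w z y

variable {E G : Type*} [NormedAddCommGroup E] [NormedSpace ℝ E] [NormedAddCommGroup G]
  [CompleteSpace G] {π : E →+ G}

lemma isHomeomorph_push (hπ : ∀ v, ‖π v‖ ≤ ‖v‖) {ε : ℝ} (hε : 0 < ε) (y : G) {v : E}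
    (hv : ‖v‖ < ε) : IsHomeomorph fun z ↦ z + π (cone ε y z • v) := by
  have hK : ‖v‖₊ / ε.toNNReal < 1 := by
    rw [div_lt_one (by simpa using hε)]
    simpa [← NNReal.coe_lt_coe, hε.le] using hv
  refine isHomeomorph_id_add_of_lipschitzWith (LipschitzWith.of_dist_le_mul fun z w ↦ ?_) hK
  calc dist (π (cone ε y z • v)) (π (cone ε y w • v))
    _ = ‖π ((cone ε y z - cone ε y w) • v)‖ := by rw [dist_eq_norm, ← map_sub, ← sub_smul]
    _ ≤ ‖(cone ε y z - cone ε y w) • v‖ := hπ _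
    _ = dist (cone ε y z) (cone ε y w) * ‖v‖ := norm_smul _ _
    _ ≤ dist z w / ε * ‖v‖ := by gcongr; exact dist_cone_le hε y z w
    _ = ↑(‖v‖₊ / ε.toNNReal) * dist z w := by
      rw [NNReal.coe_div, coe_nnnorm, Real.coe_toNNReal _ hε.le]
      ring

variable {f : G → G} {A : Set G} {x : G}

lemma IsotopicToIdRelAlong.push (hπ : ∀ v, ‖π v‖ ≤ ‖v‖) {c : unitInterval → G} {ε : ℝ}
    (hε : 0 < ε) (hA : ∀ t, ∀ a ∈ A, ε ≤ dist a (c t)) {v : unitInterval → E} (hv : Continuous v)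
    (hv₀ : v 0 = 0) (hv₁ : v 1 = 0) (hvε : ∀ t, ‖v t‖ < ε) (hf : IsotopicToIdRelAlong f A x c) :
    IsotopicToIdRelAlong f A x fun t ↦ c t + π (v t) := by
  obtain ⟨H, hH, hH₁, hHx⟩ := hf
  obtain rfl : (fun t ↦ H (t, x)) = c := funext hHx
  have hHcont := hH.continuous
  have hπcont : Continuous π := AddMonoidHomClass.continuous_of_bound π 1 (by simpa using hπ)
  refine ⟨fun p ↦ H p + π (cone ε (H (p.1, x)) (H p) • v p.1), ⟨?_, fun t ↦ ?_, fun y ↦ ?_,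
    fun t a ha ↦ ?_⟩, fun y ↦ ?_, fun t ↦ ?_⟩
  · unfold cone
    fun_prop
  · exact (isHomeomorph_push hπ hε (H (t, x)) (hvε t)).comp (hH.isHomeomorph t)
  · simp [hv₀, hH.map_zero]
  · simp [hH.map_eq_self t ha, cone_eq_zero hε (hA t a ha)]
  · simp [hv₁, hH₁]
  · simp [cone_self]

lemma exists_forall_le_dist {S : Type*} [TopologicalSpace S] [CompactSpace S] {M : Type*}
    [PseudoMetricSpace M] {A : Set M} (hA : IsClosed A) {g : S → M} (hg : Continuous g)
    (hgA : ∀ s, g s ∉ A) : ∃ ε > 0, ∀ s, ∀ a ∈ A, ε ≤ dist a (g s) := by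
  have hdisj : Disjoint (range g) A := disjoint_left.mpr (forall_mem_range.mpr hgA)
  obtain ⟨ε, hε, hthick⟩ := hdisj.exists_thickenings (isCompact_range hg) hA
  refine ⟨ε, hε, fun s a ha ↦ le_of_not_gt fun hlt ↦ ?_⟩
  exact disjoint_left.mp hthick (Metric.mem_thickening_iff.mpr ⟨_, ⟨s, rfl⟩, hlt⟩)
    (Metric.self_subset_thickening hε A ha)

theorem IsotopicToIdRelAlong.of_homotopic (hπ : ∀ v, ‖π v‖ ≤ ‖v‖) (hA : IsClosed A)
    {a b : ↥(π ⁻¹' A)ᶜ} {p q : Path a b} (hpq : p.Homotopic q)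
    (hf : IsotopicToIdRelAlong f A x fun t ↦ π (p t)) :
    IsotopicToIdRelAlong f A x fun t ↦ π (q t) := by
  obtain ⟨Γ⟩ := hpq
  have hπcont : Continuous π := AddMonoidHomClass.continuous_of_bound π 1 (by simpa using hπ)
  obtain ⟨ε, hε, hεA⟩ := exists_forall_le_dist hA (g := fun s ↦ π (Γ s)) (by fun_prop)
    fun s ↦ (Γ s).2
  obtain ⟨δ, hδ, hΓδ⟩ := Metric.uniformContinuous_iff.mp
    (CompactSpace.uniformContinuous_of_continuous Γ.continuous) ε hε
  let Along (s : unitInterval) : Prop := IsotopicToIdRelAlong f A x fun t ↦ π (Γ (s, t))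
  have push_of_dist_lt {s s' : unitInterval} (hs : dist s' s < δ) (h : Along s) : Along s' := by
    have hclose (t) : dist (Γ (s', t)) (Γ (s, t)) < ε := hΓδ (by simpa [Prod.dist_eq, hδ] using hs)
    have hpush := h.push hπ hε (fun t ↦ hεA (s, t)) (v := fun t ↦ (Γ (s', t) : E) - Γ (s, t))
      (by fun_prop) (by simp) (by simp)
      fun t ↦ by simpa [Subtype.dist_eq, dist_eq_norm] using hclose t
    simpa only [← map_add, add_sub_cancel] using hpush
  have along_one : Along 0 → Along 1 := by
    refine PreconnectedSpace.induction₂' (fun s s' ↦ Along s → Along s') (fun s ↦ ?_)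
      ⟨fun _ _ _ h h' ↦ h' ∘ h⟩ 0 1
    filter_upwards [Metric.ball_mem_nhds s hδ] with s' hs'
    exact ⟨push_of_dist_lt hs', push_of_dist_lt (dist_comm s s' ▸ hs')⟩
  simpa [Along] using along_one (by simpa [Along] using hf)

end Push

section Lift

lemma finite_preimage_inter_of_isCoveringMap {E X : Type*} [TopologicalSpace E] [TopologicalSpace X]
    [T1Space X] {p : E → X} (hp : IsCoveringMap p) {A : Set X} (hA : A.Finite) {S : Set E}
    (hS : IsCompact S) : (p ⁻¹' A ∩ S).Finite := by
  have hfiber (a : X) : (p ⁻¹' {a} ∩ S).Finite := by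
    have := (hp a).discreteTopology_fiber
    exact (hS.inter_left (isClosed_singleton.preimage hp.continuous)).finite
      (IsDiscrete.mono (s := p ⁻¹' {a}) ⟨this⟩ inter_subset_left)
  rw [← biUnion_preimage_singleton, iUnion₂_inter]
  exact hA.biUnion fun a _ ↦ hfiber a

lemma eq_self_of_iterate_eq_self {E : Type*} [AddCommGroup E] [IsAddTorsionFree E] {φ : E → E}
    {x w : E} (hφ : ∀ z, φ (z + w) = φ z + w) (hx : φ x = x + w) {k : ℕ} (hk : k ≠ 0)
    (hiter : φ^[k] x = x) : φ x = x := by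
  have iterate_eq : φ^[k] x = x + k • w := by
    rw [Function.Commute.iterate_eq_of_map_eq (g := (· + w)) hφ k hx, add_right_iterate]
  have hw : k • w = 0 := by simpa [iterate_eq] using hiter
  rw [hx, (nsmul_eq_zero_iff_right hk).mp hw, add_zero]

variable {E G : Type*} [AddCommGroup E] [TopologicalSpace E] [AddCommGroup G] [TopologicalSpace G]
  {π : E →+ G} {H : unitInterval × G → G} {A : Set G}

lemma IsIsotopyRel.exists_displacement [IsTopologicalAddGroup G] (hπ : IsCoveringMap π)
    (hH : IsIsotopyRel H A) :
    ∃ u : C(unitInterval × G, E), (∀ x, u (0, x) = 0) ∧ (∀ t x, H (t, x) = x + π (u (t, x))) ∧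
      ∀ t, ∀ x ∈ A, u (t, x) = 0 := by
  let D : C(unitInterval × G, G) := ⟨fun p ↦ H p - p.2, hH.continuous.sub continuous_snd⟩
  have hD₀ (x : G) : D (0, x) = π (ContinuousMap.const G 0 x) := by simp [D, hH.map_zero]
  let u := hπ.liftHomotopy D (.const G 0) hD₀
  have hu₀ (x) : u (0, x) = 0 := hπ.liftHomotopy_zero D (.const G 0) hD₀ x
  have hu (p) : π (u p) = H p - p.2 := congrFun (hπ.liftHomotopy_lifts D (.const G 0) hD₀) p
  refine ⟨u, hu₀, fun t x ↦ by rw [hu, add_sub_cancel], fun t x hx ↦ ?_⟩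
  refine congrFun (hπ.eq_of_comp_eq (g₁ := fun t ↦ u (t, x)) (g₂ := fun _ ↦ 0) (by fun_prop)
    continuous_const (funext fun t ↦ ?_) 0 (hu₀ x)) t
  simp [hu, hH.map_eq_self t hx]

lemma isHomeomorph_lift [IsTopologicalAddGroup E] {h : G → G} (hh : IsHomeomorph h)
    (hπ : Continuous π) {u : G → E} (hu : Continuous u) (hhu : ∀ x, h x = x + π (u x)) :
    IsHomeomorph fun z ↦ z + u (π z) := by
  have hsymm (x : G) : (hh.homeomorph h).symm (x + π (u x)) = x :=
    (hh.homeomorph h).symm_apply_eq.mpr (hhu x).symm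
  let lift : E ≃ₜ E := {
    toFun z := z + u (π z)
    invFun w := w - u ((hh.homeomorph h).symm (π w))
    left_inv z := by simp [hsymm]
    right_inv w := by
      obtain ⟨x, hx⟩ := hh.surjective (π w)
      have hπx : π w - π (u x) = x := by rw [← hx, hhu, add_sub_cancel_right]
      have hsymmx : (hh.homeomorph h).symm (π w) = x := by rw [← hx, hhu, hsymm]
      simp [hsymmx, hπx]
    continuous_invFun := by fun_prop }
  exact lift.isHomeomorph

theorem IsIsotopyRel.exists_lift [IsTopologicalAddGroup E] [IsTopologicalAddGroup G]
    (hπ : IsCoveringMap π) (hH : IsIsotopyRel H A) :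
    ∃ H', IsIsotopyRel H' (π ⁻¹' A) ∧ (∀ t z, π (H' (t, z)) = H (t, π z)) ∧
      ∀ t z w, π w = 0 → H' (t, z + w) = H' (t, z) + w := by
  obtain ⟨u, hu₀, hu, huA⟩ := hH.exists_displacement hπ
  have hπcont := hπ.continuous
  refine ⟨fun p ↦ p.2 + u (p.1, π p.2), ⟨by fun_prop, fun t ↦ ?_, fun z ↦ ?_, fun t z hz ↦ ?_⟩,
    fun t z ↦ ?_, fun t z w hw ↦ ?_⟩
  · exact isHomeomorph_lift (hH.isHomeomorph t) hπcont (by fun_prop) (hu t)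
  · simp [hu₀]
  · simp [huA t _ hz]
  · simp [hu]
  · simp [hw, add_right_comm]

end Lift

section Insert

lemma isotopicToIdRel_singleton {G : Type*} [AddCommGroup G] [TopologicalSpace G]
    [IsTopologicalAddGroup G] {f : G → G} {x : G} (hx : f x = x) (hf : IsotopicToIdRel f ∅) :
    IsotopicToIdRel f {x} := by
  obtain ⟨H, hH, hHt, hH₀, hH₁, -⟩ := hf
  refine ⟨fun p ↦ H p - (H (p.1, x) - x), by fun_prop, fun t ↦ ?_, fun y ↦ ?_, fun y ↦ ?_, ?_⟩
  · exact (Homeomorph.subRight (H (t, x) - x)).isHomeomorph.comp (hHt t)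
  · simp [hH₀]
  · simp [hH₁, hx]
  · rintro t y rfl
    simp

variable {G : Type*} [NormedAddCommGroup G] {π : ℝ × ℝ →+ G} {f : G → G} {A : Set G}

lemma nontrivial_preimage (hsurj : Function.Surjective π) (hker : ∃ w ≠ 0, π w = 0)
    (hA : A.Nonempty) : (π ⁻¹' A).Nontrivial := by
  obtain ⟨w, hw, hπw⟩ := hker
  obtain ⟨a, ha⟩ := hA.preimage hsurj
  exact ⟨a, ha, a + w, by simpa [hπw] using ha, by simpa using hw⟩

theorem isotopicToIdRel_insert [CompleteSpace G] (hπ : IsCoveringMap π)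
    (hsurj : Function.Surjective π) (hnorm : ∀ v, ‖π v‖ ≤ ‖v‖) (hker : ∃ w ≠ 0, π w = 0)
    (hA : A.Finite) (hAne : A.Nonempty) {x : G} (hxA : x ∉ A) (hx : f x = x) {k : ℕ} (hk : k ≠ 0)
    (hfk : IsotopicToIdRel f^[k] (insert x A)) (hf : IsotopicToIdRel f A) :
    IsotopicToIdRel f (insert x A) := by
  obtain ⟨H, hH, hH₁⟩ := isotopicToIdRel_iff.mp hf
  obtain ⟨K, hK, hK₁⟩ := isotopicToIdRel_iff.mp hfk
  obtain ⟨H', hH', hπH', equivariant⟩ := hH.exists_lift hπ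
  obtain ⟨K', hK', hπK', -⟩ := hK.exists_lift hπ
  have hH'₁ : Continuous fun z ↦ H' (1, z) := (hH'.isHomeomorph 1).continuous
  have iterate_lift : (fun z ↦ H' (1, z))^[k] = fun z ↦ K' (1, z) := by
    have semiconj : Function.Semiconj π (fun z ↦ H' (1, z)) f := fun z ↦ by rw [hπH', hH₁]
    obtain ⟨a, ha⟩ := hAne.preimage hsurj
    refine hπ.eq_of_comp_eq (hH'₁.iterate k) (hK'.isHomeomorph 1).continuous (funext fun z ↦ ?_) a
      ((Function.iterate_fixed (hH'.map_eq_self 1 ha) k).trans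
        (hK'.map_eq_self 1 (.inr ha)).symm)
    exact (semiconj.iterate_right k z).trans ((hπK' 1 z).trans (hK₁ _)).symm
  obtain ⟨x', rfl⟩ := hsurj x
  have lift_fixed : H' (1, x') = x' := by
    refine eq_self_of_iterate_eq_self (φ := fun z ↦ H' (1, z)) (w := H' (1, x') - x')
      (fun z ↦ equivariant 1 z _ ?_) (add_sub_cancel _ _).symm hk ?_
    · rw [map_sub, hπH', hH₁, hx, sub_self]
    · rw [iterate_lift]
      exact hK'.map_eq_self 1 (.inl rfl)
  have trace_eq_one := hH'.traceLoop_eq_one (x₀ := ⟨x', hxA⟩)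
    (fun R ↦ finite_preimage_inter_of_isCoveringMap hπ hA (isCompact_closedBall 0 R))
    (nontrivial_preimage hsurj hker hAne)
    (hK'.mono (insert_subset (.inl rfl) fun _ ↦ .inr)) (Subtype.ext lift_fixed) hk iterate_lift
  refine (IsotopicToIdRelAlong.of_homotopic hnorm hA.isClosed
    (Path.Homotopic.Quotient.eq.mp trace_eq_one) ?_).isotopicToIdRel_insert
  exact ⟨H, hH, hH₁, fun t ↦ (hπH' t x').symm⟩

theorem stmt10_general [CompleteSpace G] (hπ : IsCoveringMap π) (hsurj : Function.Surjective π)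
    (hnorm : ∀ v, ‖π v‖ ≤ ‖v‖) (hker : ∃ w ≠ 0, π w = 0) (hf : IsotopicToIdRel f ∅) {F : Set G}
    (hF : F.Finite) (hfix : ∀ x ∈ F, f x = x) {k : ℕ} (hk : k ≠ 0)
    (hfk : IsotopicToIdRel f^[k] F) : IsotopicToIdRel f F := by
  refine Finite.induction_on_subset (motive := fun A _ ↦ IsotopicToIdRel f A) F hF hf ?_
  intro x A hx hAF hxA hfA
  rcases A.eq_empty_or_nonempty with rfl | hAne
  · rw [insert_empty_eq]
    exact isotopicToIdRel_singleton (hfix x hx) hf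
  · exact isotopicToIdRel_insert hπ hsurj hnorm hker (hF.subset hAF) hAne hxA (hfix x hx) hk
      (hfk.mono (insert_subset hx hAF)) hfA

end Insert

section Torus

/-- The covering homomorphism from the plane onto the torus `(ℝ/ℤ) × (ℝ/ℤ)`. -/
def torusProj : ℝ × ℝ →+ AddCircle (1 : ℝ) × AddCircle (1 : ℝ) :=
  (QuotientAddGroup.mk' (AddSubgroup.zmultiples (1 : ℝ))).prodMap
    (QuotientAddGroup.mk' (AddSubgroup.zmultiples (1 : ℝ)))

lemma isOpenQuotientMap_torusProj : IsOpenQuotientMap torusProj :=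
  QuotientAddGroup.isOpenQuotientMap_mk.prodMap QuotientAddGroup.isOpenQuotientMap_mk

lemma isCoveringMap_torusProj : IsCoveringMap torusProj := by
  refine (isOpenQuotientMap_torusProj.isQuotientMap
    |>.isAddQuotientCoveringMap_of_isDiscrete_ker_addMonoidHom ?_).isCoveringMap
  have hker : (torusProj.ker : Set (ℝ × ℝ)) =
      (AddSubgroup.zmultiples (1 : ℝ) : Set ℝ) ×ˢ (AddSubgroup.zmultiples (1 : ℝ) : Set ℝ) := by
    ext z
    simp [torusProj, AddMonoidHom.mem_ker, Prod.ext_iff]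
  have hdiscrete : IsDiscrete (AddSubgroup.zmultiples (1 : ℝ) : Set ℝ) :=
    ⟨inferInstanceAs (DiscreteTopology (AddSubgroup.zmultiples (1 : ℝ)))⟩
  rw [hker, isDiscrete_iff_nhdsWithin]
  rintro z ⟨hz₁, hz₂⟩
  rw [nhdsWithin_prod_eq, isDiscrete_iff_nhdsWithin.mp hdiscrete _ hz₁,
    isDiscrete_iff_nhdsWithin.mp hdiscrete _ hz₂, Filter.prod_pure_pure]

lemma norm_torusProj_le (z : ℝ × ℝ) : ‖torusProj z‖ ≤ ‖z‖ :=
  max_le_max QuotientAddGroup.norm_mk_le_norm QuotientAddGroup.norm_mk_le_norm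

lemma torusProj_period : torusProj (1, 0) = 0 :=
  Prod.ext (AddCircle.coe_period (1 : ℝ)) rfl

end Torus

/-- Let `f` be a homeomorphism of the torus
`T² = (ℝ/ℤ) × (ℝ/ℤ)` isotopic to the identity, let `F` be a nonempty finite set
of fixed points of `f`, and let `k ≥ 1` be such that `f^k` is isotopic to the
identity relative to `F`. Then `f` is isotopic to the identity relative to `F`. -/
theorem stmt10 (f : AddCircle (1 : ℝ) × AddCircle (1 : ℝ) →
      AddCircle (1 : ℝ) × AddCircle (1 : ℝ))
    (hf : IsHomeomorph f) (hiso : IsotopicToIdRel f ∅)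
    (F : Set (AddCircle (1 : ℝ) × AddCircle (1 : ℝ)))
    (hFfix : F ⊆ {x | f x = x}) (hFne : F.Nonempty) (hFfin : F.Finite)
    (k : ℕ) (hk : 1 ≤ k) (hfk : IsotopicToIdRel f^[k] F) :
    IsotopicToIdRel f F :=
  stmt10_general isCoveringMap_torusProj isOpenQuotientMap_torusProj.surjective norm_torusProj_le
    ⟨(1, 0), by simp, torusProj_period⟩ hiso hFfin hFfix
    (Nat.one_le_iff_ne_zero.mp hk) hfk
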